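/- Let u ∈ PC[0,1] and let (u_k) be a sequence of piecewise constant functions on [0,1] converging to u in L¹[0,1]. Then there exists k_0 such that J(u_k) ≥ J(u) for all k ≥ k_0; in particular liminf_{k→∞} J(u_k) ≥ J(u). -/

import Mathlib

open MeasureTheory Filter Set
open scoped ENNReal Classical

noncomputable section

/-- The Lebesgue measure restricted to `[0,1]`. -/
def mu01 : Measure ℝ := volume.restrict (Set.Icc (0:ℝ) 1)

/-- The step function determined by partition points `x` and values `a`. -/
def stepF {m : ℕ} (x : Fin (m + 1) → ℝ) (a : Fin m → ℝ) : ℝ → ℝ := fun t =>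
  ∑ l : Fin m, Set.indicator (Set.Ioo (x l.castSucc) (x l.succ)) (fun _ => a l) t

/-- `u` is a.e. on `[0,1]` represented by the step function with partition `x` and values `a`. -/
def IsPCRep (u : ℝ → ℝ) {m : ℕ} (x : Fin (m + 1) → ℝ) (a : Fin m → ℝ) : Prop :=
  StrictMono x ∧ x 0 = 0 ∧ x (Fin.last m) = 1 ∧ ∀ᵐ t ∂mu01, u t = stepF x a t

/-- `u` is piecewise constant on `[0,1]` (up to a.e. equality). -/
def IsPC (u : ℝ → ℝ) : Prop :=
  ∃ (m : ℕ) (x : Fin (m + 1) → ℝ) (a : Fin m → ℝ), IsPCRep u x a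

/-- The number of jumps `J(u)`: the minimal number of interior partition points over all
piecewise constant representations of `u`. -/
def jumps (u : ℝ → ℝ) : ℕ :=
  sInf {jj : ℕ | ∃ (x : Fin (jj + 2) → ℝ) (a : Fin (jj + 1) → ℝ), IsPCRep u x a}

/-- `u` is piecewise constant with all jump locations inside `S`. -/
def IsPCIn (u : ℝ → ℝ) (S : Set ℝ) : Prop :=
  ∃ (m : ℕ) (x : Fin (m + 1) → ℝ) (a : Fin m → ℝ), IsPCRep u x a ∧
    ∀ i : Fin (m + 1), i ≠ 0 → i ≠ Fin.last m → x i ∈ S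

/-- The `L¹[0,1]` distance of two functions. -/
def L1dist (u v : ℝ → ℝ) : ℝ := ∫ t, |u t - v t| ∂mu01

/-- The continuous `L¹`-Potts functional `P_γ` with data `f`. -/
def Potts (γ : ℝ) (f u : ℝ → ℝ) : ℝ≥0∞ :=
  if IsPC u then ENNReal.ofReal (γ * (jumps u : ℝ) + L1dist u f) else ⊤

/-- The (semi-)discrete `L¹`-Potts functional with data `f`, restricted to piecewise
constant functions whose jumps lie in `S`. -/
def PottsIn (γ : ℝ) (f : ℝ → ℝ) (S : Set ℝ) (u : ℝ → ℝ) : ℝ≥0∞ :=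
  if IsPCIn u S then ENNReal.ofReal (γ * (jumps u : ℝ) + L1dist u f) else ⊤

theorem eq_of_mem_Ioo_of_mem_Ioo {m : ℕ} {x : Fin (m + 1) → ℝ} (hx : StrictMono x)
    {k l : Fin m} {t : ℝ} (hk : t ∈ Ioo (x k.castSucc) (x k.succ))
    (hl : t ∈ Ioo (x l.castSucc) (x l.succ)) : k = l := by
  by_contra hne
  rcases lt_or_gt_of_ne hne with h | h
  · exact absurd (hx.monotone (Fin.succ_le_castSucc_iff.2 h)) (not_le.2 (hl.1.trans hk.2))
  · exact absurd (hx.monotone (Fin.succ_le_castSucc_iff.2 h)) (not_le.2 (hk.1.trans hl.2))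

theorem stepF_apply {m : ℕ} {x : Fin (m + 1) → ℝ} (hx : StrictMono x) (a : Fin m → ℝ)
    {l : Fin m} {t : ℝ} (ht : t ∈ Ioo (x l.castSucc) (x l.succ)) : stepF x a t = a l := by
  unfold stepF
  rw [Finset.sum_eq_single l, indicator_of_mem ht]
  · intro k _ hkl
    exact indicator_of_notMem (fun hk => hkl (eq_of_mem_Ioo_of_mem_Ioo hx hk ht)) _
  · simp

/-- A point strictly between the endpoints of a partition that is not a partition point
lies in one of the open cells. -/
theorem exists_mem_Ioo_of_notMem_range {m : ℕ} {x : Fin (m + 1) → ℝ} {t : ℝ}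
    (h0 : x 0 < t) (h1 : t < x (Fin.last m)) (ht : t ∉ range x) :
    ∃ l : Fin m, t ∈ Ioo (x l.castSucc) (x l.succ) := by
  by_contra! hcon
  have hlt : ∀ i, x i < t := by
    intro i
    induction i using Fin.induction with
    | zero => exact h0
    | succ i ih =>
      by_contra! hle
      exact hcon i ⟨ih, lt_of_le_of_ne hle fun h => ht ⟨_, h.symm⟩⟩
  exact lt_asymm h1 (hlt _)

/-- A representation can be checked cell by cell. -/
theorem isPCRep_iff {u : ℝ → ℝ} {m : ℕ} {x : Fin (m + 1) → ℝ} {a : Fin m → ℝ} :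
    IsPCRep u x a ↔ StrictMono x ∧ x 0 = 0 ∧ x (Fin.last m) = 1 ∧
      ∀ l, ∀ᵐ t, t ∈ Ioo (x l.castSucc) (x l.succ) → u t = a l := by
  unfold IsPCRep mu01
  rw [ae_restrict_iff' measurableSet_Icc, ← ae_all_iff]
  refine and_congr_right fun hx => and_congr_right fun h0 => and_congr_right fun h1 => ⟨?_, ?_⟩
  · intro h
    filter_upwards [h] with t ht l htl
    rw [← stepF_apply hx a htl]
    refine ht ⟨?_, ?_⟩
    · rw [← h0]
      exact (hx.monotone (Fin.zero_le _)).trans htl.1.le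
    · rw [← h1]
      exact htl.2.le.trans (hx.monotone (Fin.le_last _))
  · intro h
    filter_upwards [h, (finite_range x).countable.ae_notMem volume] with t ht hr htI
    have ht0 : x 0 < t := lt_of_le_of_ne (h0 ▸ htI.1) fun h => hr ⟨_, h⟩
    have ht1 : t < x (Fin.last m) := lt_of_le_of_ne (h1 ▸ htI.2) fun h => hr ⟨_, h.symm⟩
    obtain ⟨l, hl⟩ := exists_mem_Ioo_of_notMem_range ht0 ht1 hr
    rw [ht l hl, stepF_apply hx a hl]

/-- Two neighbouring cells with the same value can be merged. -/
theorem IsPCRep.merge {u : ℝ → ℝ} {n : ℕ} {x : Fin (n + 3) → ℝ} {a : Fin (n + 2) → ℝ}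
    (h : IsPCRep u x a) (i : Fin (n + 1)) (hi : a i.castSucc = a i.succ) :
    IsPCRep u (x ∘ i.succ.castSucc.succAbove) (a ∘ i.succ.succAbove) := by
  rw [isPCRep_iff] at h ⊢
  obtain ⟨hx, h0, h1, hu⟩ := h
  refine ⟨hx.comp (Fin.strictMono_succAbove _), ?_, ?_, fun l => ?_⟩
  · rw [← h0, Function.comp_apply, Fin.succAbove_of_castSucc_lt]
    · rfl
    · simp [Fin.lt_def]
  · rw [← h1, Function.comp_apply, Fin.succAbove_of_le_castSucc, Fin.succ_last]
    exact Fin.castSucc_le_castSucc_iff.2 (Fin.le_last _)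
  · simp only [Function.comp_apply]
    rcases lt_trichotomy l i with hl | rfl | hl
    · have e1 : i.succ.castSucc.succAbove l.castSucc = l.castSucc.castSucc := by
        rw [Fin.succAbove_of_castSucc_lt]
        simp only [Fin.lt_def] at *; simp; omega
      have e2 : i.succ.castSucc.succAbove l.succ = l.castSucc.succ := by
        rw [Fin.succAbove_of_castSucc_lt]
        · rfl
        · simp only [Fin.lt_def] at *; simp; omega
      have e3 : i.succ.succAbove l = l.castSucc := by
        rw [Fin.succAbove_of_castSucc_lt]
        simp only [Fin.lt_def] at *; simp; omega
      rw [e1, e2, e3]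
      exact hu _
    · have e1 : l.succ.castSucc.succAbove l.castSucc = l.castSucc.castSucc := by
        rw [Fin.succAbove_of_castSucc_lt]
        simp [Fin.lt_def]
      have e2 : l.succ.castSucc.succAbove l.succ = l.succ.succ := by
        rw [Fin.succAbove_of_le_castSucc]
        exact le_rfl
      have e3 : l.succ.succAbove l = l.castSucc := by
        rw [Fin.succAbove_of_castSucc_lt]
        simp [Fin.lt_def]
      rw [e1, e2, e3]
      filter_upwards [hu l.castSucc, hu l.succ,
        (finite_range x).countable.ae_notMem volume] with t h1 h2 h3 ht
      rcases lt_trichotomy t (x l.castSucc.succ) with hlt | heq | hgt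
      · exact h1 ⟨ht.1, hlt⟩
      · exact absurd ⟨_, heq.symm⟩ h3
      · rw [hi]
        exact h2 ⟨hgt, ht.2⟩
    · have e1 : i.succ.castSucc.succAbove l.castSucc = l.succ.castSucc := by
        rw [Fin.succAbove_of_le_castSucc]
        · rfl
        · simp only [Fin.lt_def, Fin.le_def] at *; simp; omega
      have e2 : i.succ.castSucc.succAbove l.succ = l.succ.succ := by
        rw [Fin.succAbove_of_le_castSucc]
        simp only [Fin.lt_def, Fin.le_def] at *; simp; omega
      have e3 : i.succ.succAbove l = l.succ := by
        rw [Fin.succAbove_of_le_castSucc]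
        simp only [Fin.lt_def, Fin.le_def] at *; simp; omega
      rw [e1, e2, e3]
      exact hu _

theorem IsPC.exists_isPCRep_jumps {u : ℝ → ℝ} (hu : IsPC u) :
    ∃ (x : Fin (jumps u + 2) → ℝ) (a : Fin (jumps u + 1) → ℝ), IsPCRep u x a := by
  refine Nat.sInf_mem
    (s := {jj : ℕ | ∃ (x : Fin (jj + 2) → ℝ) (a : Fin (jj + 1) → ℝ), IsPCRep u x a}) ?_
  obtain ⟨m, x, a, h⟩ := hu
  cases m with
  | zero => exact absurd (h.2.1.symm.trans h.2.2.1) zero_ne_one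
  | succ m => exact ⟨m, x, a, h⟩

theorem IsPCRep.jumps_le {u : ℝ → ℝ} {n : ℕ} {x : Fin (n + 2) → ℝ} {a : Fin (n + 1) → ℝ}
    (h : IsPCRep u x a) : jumps u ≤ n :=
  Nat.sInf_le ⟨x, a, h⟩

/-- In a minimal representation, neighbouring values differ. -/
theorem IsPCRep.ne_of_eq_jumps {u : ℝ → ℝ} {n : ℕ} {x : Fin (n + 2) → ℝ}
    {a : Fin (n + 1) → ℝ} (h : IsPCRep u x a) (hn : n = jumps u) (i : Fin n) :
    a i.castSucc ≠ a i.succ := by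
  intro hi
  cases n with
  | zero => exact i.elim0
  | succ n =>
    have := (h.merge i hi).jumps_le
    omega

theorem IsPC.integrable {u : ℝ → ℝ} (hu : IsPC u) : Integrable u mu01 := by
  obtain ⟨m, x, a, -, -, -, h⟩ := hu
  refine Integrable.congr ?_ (EventuallyEq.symm h)
  have : IsFiniteMeasure mu01 := by unfold mu01; infer_instance
  unfold stepF
  exact integrable_finsetSum _ fun l _ => (integrable_const _).indicator measurableSet_Ioo

theorem mul_sub_le_L1dist {u v : ℝ → ℝ} (hu : IsPC u) (hv : IsPC v) {p q c : ℝ}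
    (hp : 0 ≤ p) (hpq : p ≤ q) (hq : q ≤ 1)
    (h : ∀ᵐ t, t ∈ Ioo p q → c ≤ |v t - u t|) : c * (q - p) ≤ L1dist v u := by
  have hsub : Ioo p q ⊆ Icc 0 1 := fun t ht => ⟨hp.trans ht.1.le, ht.2.le.trans hq⟩
  have hint : IntegrableOn (fun t => |v t - u t|) (Icc 0 1) :=
    (hv.integrable.sub hu.integrable).abs
  calc c * (q - p) = ∫ _ in Ioo p q, c := by
        simp [hpq, mul_comm]
    _ ≤ ∫ t in Ioo p q, |v t - u t| :=
        setIntegral_mono_on_ae (by simp) (hint.mono_set hsub) measurableSet_Ioo h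
    _ ≤ L1dist v u :=
        setIntegral_mono_set hint (ae_of_all _ fun _ => abs_nonneg _) hsub.eventuallyLE

/-- If `v` is `L¹`-close to a function jumping at `s ∈ (p, q)`, then every representation of `v`
has an interior partition point in `(p, q)`. -/
theorem IsPCRep.exists_interior_mem_Ioo {u v : ℝ → ℝ} (hu : IsPC u) {n : ℕ}
    {y : Fin (n + 2) → ℝ} {b : Fin (n + 1) → ℝ} (hv : IsPCRep v y b) {p s q α β : ℝ}
    (hp : 0 ≤ p) (hps : p < s) (hsq : s < q) (hq : q ≤ 1)
    (hα : ∀ᵐ t, t ∈ Ioo p s → u t = α) (hβ : ∀ᵐ t, t ∈ Ioo s q → u t = β)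
    (hd : L1dist v u < |α - β| / 2 * min (s - p) (q - s)) :
    ∃ j : Fin n, y j.succ.castSucc ∈ Ioo p q := by
  by_contra! hcon
  have hvPC : IsPC v := ⟨_, y, b, hv⟩
  obtain ⟨hy, h0, h1, hvb⟩ := isPCRep_iff.1 hv
  have hout : ∀ i, y i ∉ Ioo p q := by
    intro i
    induction i using Fin.cases with
    | zero => exact fun h => absurd h.1 (by rw [h0]; exact not_lt.2 hp)
    | succ i =>
      induction i using Fin.lastCases with
      | last => exact fun h => absurd h.2 (by rw [Fin.succ_last, h1]; exact not_lt.2 hq)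
      | cast i => exact hcon i
  obtain ⟨l, hl⟩ := exists_mem_Ioo_of_notMem_range (x := y) (t := s)
    (by rw [h0]; linarith) (by rw [h1]; linarith)
    (by rintro ⟨i, hi⟩; exact hout i (by rw [hi]; exact ⟨hps, hsq⟩))
  have hlp : y l.castSucc ≤ p := by
    by_contra! h
    exact hout _ ⟨h, hl.1.trans hsq⟩
  have hlq : q ≤ y l.succ := by
    by_contra! h
    exact hout _ ⟨hps.trans hl.2, h⟩
  have h₁ : |b l - α| * (s - p) ≤ L1dist v u := by
    refine mul_sub_le_L1dist hu hvPC hp hps.le (by linarith) ?_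
    filter_upwards [hα, hvb l] with t ht ht' hI
    rw [ht hI, ht' ⟨by linarith [hI.1], by linarith [hI.2]⟩]
  have h₂ : |b l - β| * (q - s) ≤ L1dist v u := by
    refine mul_sub_le_L1dist hu hvPC (by linarith) hsq.le hq ?_
    filter_upwards [hβ, hvb l] with t ht ht' hI
    rw [ht hI, ht' ⟨by linarith [hI.1], by linarith [hI.2]⟩]
  have hmin : 0 < min (s - p) (q - s) := lt_min (by linarith) (by linarith)
  have h₃ := mul_le_mul_of_nonneg_left (min_le_left (s - p) (q - s)) (abs_nonneg (b l - α))
  have h₄ := mul_le_mul_of_nonneg_left (min_le_right (s - p) (q - s)) (abs_nonneg (b l - β))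
  have htri : |α - β| ≤ |b l - α| + |b l - β| := by
    rw [abs_sub_comm (b l) α]
    exact abs_sub_le _ _ _
  have h₅ := mul_le_mul_of_nonneg_right htri hmin.le
  linarith

/-- The number of jumps is lower semicontinuous with respect to `L¹` convergence. -/
theorem eventually_jumps_le {u : ℝ → ℝ} (hu : IsPC u) {useq : ℕ → ℝ → ℝ}
    (huseq : ∀ k, IsPC (useq k))
    (hconv : Tendsto (fun k => L1dist (useq k) u) atTop (nhds 0)) :
    ∀ᶠ k in atTop, jumps u ≤ jumps (useq k) := by
  obtain ⟨x, a, h⟩ := hu.exists_isPCRep_jumps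
  have hne := h.ne_of_eq_jumps rfl
  obtain ⟨hx, h0, h1, hua⟩ := isPCRep_iff.1 h
  set mid : Fin (jumps u + 1) → ℝ := fun l => (x l.castSucc + x l.succ) / 2 with hmid
  have hlt : ∀ l : Fin (jumps u + 1), x l.castSucc < x l.succ := fun l =>
    hx Fin.castSucc_lt_succ
  have hleft : ∀ l, x l.castSucc < mid l := fun l => by simp only [hmid]; linarith [hlt l]
  have hright : ∀ l, mid l < x l.succ := fun l => by simp only [hmid]; linarith [hlt l]
  have hmono : Monotone mid := fun k l hkl => by
    have e1 := hx.monotone (Fin.castSucc_le_castSucc_iff.2 hkl)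
    have e2 := hx.monotone (Fin.succ_le_succ_iff.2 hkl)
    simp only [hmid]
    linarith
  have hnonneg : ∀ i, 0 ≤ x i := fun i => h0 ▸ hx.monotone (Fin.zero_le i)
  have hle_one : ∀ i, x i ≤ 1 := fun i => h1 ▸ hx.monotone (Fin.le_last i)
  have hleft' : ∀ i : Fin (jumps u), x i.castSucc.succ < mid i.succ := fun i => hleft i.succ
  have hev : ∀ᶠ k in atTop, ∀ i : Fin (jumps u), L1dist (useq k) u <
      |a i.castSucc - a i.succ| / 2 *
        min (x i.castSucc.succ - mid i.castSucc) (mid i.succ - x i.castSucc.succ) := by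
    refine eventually_all.2 fun i => hconv.eventually_lt_const ?_
    have e1 := abs_pos.2 (sub_ne_zero.2 (hne i))
    have e2 := lt_min (sub_pos.2 (hright i.castSucc)) (sub_pos.2 (hleft' i))
    positivity
  filter_upwards [hev] with k hk
  obtain ⟨y, b, hv⟩ := (huseq k).exists_isPCRep_jumps
  have hex : ∀ i : Fin (jumps u), ∃ j : Fin (jumps (useq k)),
      y j.succ.castSucc ∈ Ioo (mid i.castSucc) (mid i.succ) := by
    intro i
    refine hv.exists_interior_mem_Ioo hu ((hnonneg _).trans (hleft _).le) (hright _)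
      (hleft' i) ((hright _).le.trans (hle_one _)) ?_ ?_ (hk i)
    · filter_upwards [hua i.castSucc] with t ht hI
      exact ht ⟨(hleft _).trans hI.1, hI.2⟩
    · filter_upwards [hua i.succ] with t ht hI
      exact ht ⟨hI.1, hI.2.trans (hright _)⟩
  choose f hf using hex
  have hinj : Function.Injective f := by
    intro i j hij
    have hi := hf i
    have hj := hf j
    rw [hij] at hi
    by_contra hne'
    rcases lt_or_gt_of_ne hne' with h | h
    · exact absurd (hmono (Fin.succ_le_castSucc_iff.2 h)) (not_le.2 (hj.1.trans hi.2))
    · exact absurd (hmono (Fin.succ_le_castSucc_iff.2 h)) (not_le.2 (hi.1.trans hj.2))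
  simpa using Fintype.card_le_of_injective f hinj

theorem statement_5
    (u : ℝ → ℝ) (hu : IsPC u)
    (useq : ℕ → ℝ → ℝ) (huseq : ∀ k, IsPC (useq k))
    (hconv : Tendsto (fun k => L1dist (useq k) u) atTop (nhds 0)) :
    (∃ k0 : ℕ, ∀ k ≥ k0, jumps u ≤ jumps (useq k)) ∧
    (jumps u : WithTop ℕ) ≤ liminf (fun k => (jumps (useq k) : WithTop ℕ)) atTop := by
  have h := eventually_jumps_le hu huseq hconv
  refine ⟨eventually_atTop.1 h, le_liminf_of_le (by isBoundedDefault) ?_⟩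
  filter_upwards [h] with k hk
  exact_mod_cast hk
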